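/- Let u : ℝⁿ → ℝ be smooth with compact support, g : ℝⁿ → ℝ smooth, and define r = u Δ²g + 2 ∇(Δg)·∇u + 2 Δg Δu + 2 Δ(∇g·∇u) + 2 ∇g·∇(Δu). Then ∫ r u = 0, where the integral is over ℝⁿ. -/

import Mathlib

/-!
Everything follows from Green's first identity `∫ w Δf = -∫ ∇w·∇f`, valid for smooth `w`, `f` one
of which has compact support (`integral_mul_lap`). With `h = ∇g·∇u`, it gives

* `∫ u² Δ²g = -∫ ∇(u²)·∇(Δg) = -2 ∫ u ∇u·∇(Δg)`, so the first two terms of `∫ r u` cancel;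
* `∫ u Δh = ∫ h Δu`, by applying it twice;
* `∫ (u Δu) Δg = -∫ ∇(u Δu)·∇g = -∫ u ∇(Δu)·∇g - ∫ h Δu`,

so the last three terms of `∫ r u` cancel as well.
-/

open MeasureTheory Real
open scoped RealInnerProductSpace

/-- The Laplacian `Δf = div (∇f)` of `f : ℝⁿ → ℝ`, as the sum of second partial derivatives. -/
noncomputable def lap {n : ℕ} (f : EuclideanSpace ℝ (Fin n) → ℝ) (x : EuclideanSpace ℝ (Fin n)) : ℝ :=
  ∑ i : Fin n, fderiv ℝ (fun y => fderiv ℝ f y (EuclideanSpace.single i 1)) x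
    (EuclideanSpace.single i 1)

/-- The bi-Laplacian `Δ²f = Δ (Δ f)`. -/
noncomputable def bilap {n : ℕ} (f : EuclideanSpace ℝ (Fin n) → ℝ) :
    EuclideanSpace ℝ (Fin n) → ℝ :=
  lap (lap f)

section Aux

variable {n : ℕ} {f w a b : EuclideanSpace ℝ (Fin n) → ℝ}

lemma contDiff_partial (hf : ContDiff ℝ (⊤ : ℕ∞) f) (v : EuclideanSpace ℝ (Fin n)) :
    ContDiff ℝ (⊤ : ℕ∞) (fun y => fderiv ℝ f y v) :=
  (hf.fderiv_right (m := (⊤ : ℕ∞)) (by simp)).clm_apply contDiff_const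

lemma contDiff_lap (hf : ContDiff ℝ (⊤ : ℕ∞) f) : ContDiff ℝ (⊤ : ℕ∞) (lap f) := by
  unfold lap
  exact ContDiff.sum fun i _ => contDiff_partial (contDiff_partial hf _) _

lemma hasCompactSupport_lap (hf : HasCompactSupport f) : HasCompactSupport (lap f) := by
  have key : ∀ x ∉ tsupport f, lap f x = 0 := by
    intro x hx
    refine Finset.sum_eq_zero fun i _ => ?_
    have h1 : tsupport (fun y => fderiv ℝ f y (EuclideanSpace.single i 1)) ⊆ tsupport f :=
      tsupport_fderiv_apply_subset ℝ _
    have h2 := tsupport_fderiv_apply_subset (f := fun y => fderiv ℝ f y (EuclideanSpace.single i 1))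
      ℝ (EuclideanSpace.single i 1)
    exact image_eq_zero_of_notMem_tsupport
      (f := fun z => fderiv ℝ (fun y => fderiv ℝ f y (EuclideanSpace.single i 1)) z
        (EuclideanSpace.single i 1)) fun h => hx (h1 (h2 h))
  exact HasCompactSupport.intro hf key

lemma inner_gradient_eq_sum (f w : EuclideanSpace ℝ (Fin n) → ℝ) (x : EuclideanSpace ℝ (Fin n)) :
    ⟪gradient f x, gradient w x⟫ = ∑ i : Fin n, fderiv ℝ f x (EuclideanSpace.single i 1) *
      fderiv ℝ w x (EuclideanSpace.single i 1) := by
  rw [← (EuclideanSpace.basisFun (Fin n) ℝ).sum_inner_mul_inner]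
  refine Finset.sum_congr rfl fun i _ => ?_
  rw [real_inner_comm (gradient w x)]
  simp [gradient]

lemma contDiff_inner_gradient (hf : ContDiff ℝ (⊤ : ℕ∞) f) (hw : ContDiff ℝ (⊤ : ℕ∞) w) :
    ContDiff ℝ (⊤ : ℕ∞) (fun x => ⟪gradient f x, gradient w x⟫) := by
  simp only [inner_gradient_eq_sum]
  exact ContDiff.sum fun i _ => (contDiff_partial hf _).mul (contDiff_partial hw _)

lemma inner_gradient_mul (ha : ContDiff ℝ (⊤ : ℕ∞) a) (hb : ContDiff ℝ (⊤ : ℕ∞) b)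
    (f : EuclideanSpace ℝ (Fin n) → ℝ) (x : EuclideanSpace ℝ (Fin n)) :
    ⟪gradient (fun y => a y * b y) x, gradient f x⟫ =
      a x * ⟪gradient b x, gradient f x⟫ + b x * ⟪gradient a x, gradient f x⟫ := by
  have hda : DifferentiableAt ℝ a x := ha.differentiable (by simp) x
  have hdb : DifferentiableAt ℝ b x := hb.differentiable (by simp) x
  simp only [inner_gradient_eq_sum, Finset.mul_sum, ← Finset.sum_add_distrib]
  refine Finset.sum_congr rfl fun i _ => ?_
  rw [fderiv_fun_mul hda hdb]
  simp
  ring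

/-- Green's first identity on `ℝⁿ`. -/
lemma integral_mul_lap (hw : ContDiff ℝ (⊤ : ℕ∞) w) (hf : ContDiff ℝ (⊤ : ℕ∞) f)
    (hs : HasCompactSupport w ∨ HasCompactSupport f) :
    ∫ x, w x * lap f x = -∫ x, ⟪gradient w x, gradient f x⟫ := by
  have supp : ∀ {p : EuclideanSpace ℝ (Fin n) → ℝ} (v : EuclideanSpace ℝ (Fin n)),
      HasCompactSupport p → HasCompactSupport (fun y => fderiv ℝ p y v) :=
    fun v hp => hp.fderiv_apply ℝ v
  have int : ∀ {p q : EuclideanSpace ℝ (Fin n) → ℝ}, ContDiff ℝ (⊤ : ℕ∞) p →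
      ContDiff ℝ (⊤ : ℕ∞) q → HasCompactSupport p ∨ HasCompactSupport q →
      Integrable (fun x => p x * q x) := by
    intro p q hp hq h
    exact (hp.mul hq).continuous.integrable_of_hasCompactSupport
      (h.elim (fun h => h.mul_right) (fun h => h.mul_left))
  let e : Fin n → EuclideanSpace ℝ (Fin n) := fun i => EuclideanSpace.single i 1
  have h2 : ∀ i, Integrable fun x => w x * fderiv ℝ (fun y => fderiv ℝ f y (e i)) x (e i) :=
    fun i => int hw (contDiff_partial (contDiff_partial hf _) _)
      (hs.imp id fun h => supp _ (supp _ h))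
  have h1 : ∀ i, Integrable fun x => fderiv ℝ w x (e i) * fderiv ℝ f x (e i) :=
    fun i => int (contDiff_partial hw _) (contDiff_partial hf _) (hs.imp (supp _) (supp _))
  simp only [inner_gradient_eq_sum, lap, Finset.mul_sum]
  rw [integral_finsetSum _ fun i _ => h2 i, integral_finsetSum _ fun i _ => h1 i,
    ← Finset.sum_neg_distrib]
  refine Finset.sum_congr rfl fun i _ => ?_
  exact integral_mul_fderiv_eq_neg_fderiv_mul_of_integrable (h1 i) (h2 i)
    (int hw (contDiff_partial hf _) (hs.imp id (supp _)))
    (fun x _ => hw.differentiable (by simp) x)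
    (fun x _ => (contDiff_partial hf _).differentiable (by simp) x)

end Aux

/-- The paper's claim `∫ r u = 0`, obtained from Stokes' formula. -/
theorem integral_r_u_eq_zero
    {n : ℕ} (hn : 1 ≤ n) (u g : EuclideanSpace ℝ (Fin n) → ℝ)
    (hu : ContDiff ℝ (⊤ : ℕ∞) u) (husupp : HasCompactSupport u)
    (hg : ContDiff ℝ (⊤ : ℕ∞) g)
    (r : EuclideanSpace ℝ (Fin n) → ℝ)
    (hr : r = fun x =>
      u x * bilap g x + 2 * ⟪gradient (lap g) x, gradient u x⟫
        + 2 * lap g x * lap u x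
        + 2 * lap (fun y => ⟪gradient g y, gradient u y⟫) x
        + 2 * ⟪gradient g x, gradient (lap u) x⟫) :
    ∫ x, r x * u x = 0 := by
  have hlg := contDiff_lap hg
  have hlu := contDiff_lap hu
  have hlus := hasCompactSupport_lap husupp
  have hh := contDiff_inner_gradient hg hu
  have int : ∀ {p q : EuclideanSpace ℝ (Fin n) → ℝ}, ContDiff ℝ (⊤ : ℕ∞) p →
      ContDiff ℝ (⊤ : ℕ∞) q → HasCompactSupport p → Integrable (fun x => p x * q x) :=
    fun hp hq h => (hp.mul hq).continuous.integrable_of_hasCompactSupport h.mul_right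
  have i1 := int (hu.mul hu) (contDiff_lap hlg) husupp.mul_right
  have i2 := int hu (contDiff_inner_gradient hu hlg) husupp
  have i3 := int (hu.mul hlu) hlg husupp.mul_right
  have i4 := int hu (contDiff_lap hh) husupp
  have i5 := int hu (contDiff_inner_gradient hlu hg) husupp
  have i6 := int hlu (contDiff_inner_gradient hu hg) hlus
  have e1 := integral_mul_lap (hu.mul hu) hlg (.inl husupp.mul_right)
  have e3 := integral_mul_lap (hu.mul hlu) hg (.inl husupp.mul_right)
  have e4 := integral_mul_lap hu hh (.inl husupp)
  have e4' := integral_mul_lap hh hu (.inr husupp)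
  simp only [inner_gradient_mul hu hu] at e1
  simp only [inner_gradient_mul hu hlu] at e3
  rw [integral_add i2 i2] at e1
  rw [integral_add i5 i6] at e3
  have e6 : ∫ x, lap u x * ⟪gradient u x, gradient g x⟫ =
      ∫ x, u x * lap (fun y => ⟪gradient g y, gradient u y⟫) x := by
    rw [e4]
    simp only [real_inner_comm _ (gradient u _)] at e4' ⊢
    rw [← e4']
    simp only [mul_comm]
  have hsplit : (fun x => r x * u x) = fun x =>
      (u x * u x * lap (lap g) x + 2 * (u x * ⟪gradient u x, gradient (lap g) x⟫))
        + 2 * (u x * lap u x * lap g x)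
        + 2 * (u x * lap (fun y => ⟪gradient g y, gradient u y⟫) x)
        + 2 * (u x * ⟪gradient (lap u) x, gradient g x⟫) := by
    funext x
    subst hr
    beta_reduce
    rw [real_inner_comm (gradient u x) (gradient (lap g) x),
      real_inner_comm (gradient (lap u) x) (gradient g x)]
    simp only [bilap]
    ring
  have j2 := i1.fun_add (i2.const_mul 2)
  have j3 := j2.fun_add (i3.const_mul 2)
  have j4 := j3.fun_add (i4.const_mul 2)
  rw [hsplit, integral_add j4 (i5.const_mul 2), integral_add j3 (i4.const_mul 2),
    integral_add j2 (i3.const_mul 2), integral_add i1 (i2.const_mul 2)]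
  simp only [integral_const_mul]
  linarith
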